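/- Suppose f, g : ℝ^N → [−∞, ∞] are Borel measurable, g ≥ 0, f is not identically ∞ and g is not identically ∞. Let f_+ := max{f, 0} and m := m_{f_+,g} = (m_{f_+} − m_g)/2. Then f⊻g ≥ 0 and for every Young function φ: ‖(f⊻g)⁻¹‖_φ ≤ 2^N ( ‖((f_+)̌ − m)⁻¹‖_φ + ‖(ǧ + m)⁻¹‖_φ ). -/

import Mathlib

open MeasureTheory Filter Set
open scoped ENNReal NNReal Pointwise

noncomputable section

/-- `ℝ^N` with the Euclidean structure and Lebesgue measure. -/
abbrev ES (N : ℕ) := EuclideanSpace ℝ (Fin N)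

variable {N : ℕ}

/-- The operation `(f ⊼ g)(x) = sup_y min (f (x - y)) (g y)` for extended-real valued
functions. -/
def supMinE (f g : ES N → EReal) (x : ES N) : EReal := ⨆ y, min (f (x - y)) (g y)

/-- The operation `(f ⊻ g)(x) = inf_y max (f (x - y)) (g y)` for extended-real valued
functions. -/
def infMaxE (f g : ES N → EReal) (x : ES N) : EReal := ⨅ y, max (f (x - y)) (g y)

/-- The infimal convolution `(f □ g)(x) = inf_y (f (x - y) + g y)`. -/
def infConvE (f g : ES N → EReal) (x : ES N) : EReal := ⨅ y, (f (x - y) + g y)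

/-- The operation `(f ⊼ g)(x) = sup_y min (f (x - y)) (g y)` for `[0,∞]`-valued functions. -/
def supMin (f g : ES N → ℝ≥0∞) (x : ES N) : ℝ≥0∞ := ⨆ y, min (f (x - y)) (g y)

/-- A Young function: a nonconstant, nondecreasing, convex, left-continuous
`φ : [0,∞] → [0,∞]` with `φ 0 = 0`. -/
structure IsYoungFunction (φ : ℝ≥0∞ → ℝ≥0∞) : Prop where
  nonconstant : ∃ x y, φ x ≠ φ y
  map_zero : φ 0 = 0
  mono : Monotone φ
  convex : ∀ ⦃a b x y : ℝ≥0∞⦄, a + b = 1 → φ (a * x + b * y) ≤ a * φ x + b * φ y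
  left_continuous : ∀ x, ContinuousWithinAt φ (Set.Iio x) x

/-- The Luxemburg norm `‖h‖_φ = inf {r > 0 | ∫ φ (r⁻¹ |h|) ≤ 1}` (`= ∞` if no such `r`),
for a nonnegative function `h`. -/
def luxNorm (φ : ℝ≥0∞ → ℝ≥0∞) (h : ES N → ℝ≥0∞) : ℝ≥0∞ :=
  sInf {r : ℝ≥0∞ | 0 < r ∧ ∫⁻ x, φ (r⁻¹ * h x) ≤ 1}

/-- The nonnegative part of an extended real, as an element of `[0,∞]`. -/
def toENN (a : EReal) : ℝ≥0∞ := if a = ⊤ then ⊤ else ENNReal.ofReal a.toReal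

/-- The reciprocal `1/a ∈ [0,∞]` of an extended real (intended for `a ≥ 0`), with the
conventions `1/0 = ∞` and `1/∞ = 0`. -/
def eInv (a : EReal) : ℝ≥0∞ := (toENN a)⁻¹

/-- The enclosing radius of a set `X ⊆ ℝ^N`: the infimum of the radii of closed balls
containing `X` (`0` for `X = ∅`, `∞` if `X` is unbounded). -/
def encRadius (X : Set (ES N)) : ℝ≥0∞ := sInf {r : ℝ≥0∞ | ∃ c : ES N, ∀ x ∈ X, edist x c ≤ r}

/-- The transform `f̂(x) = γ_f^+(|x|)` where `γ_f^+(t) = inf {ξ | ρ_f^+(ξ) ≤ t}` and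
`ρ_f^+(ξ)` is the enclosing radius of the upper level set `{f > ξ}`. -/
def hatE (f : ES N → EReal) (x : ES N) : EReal :=
  sInf {ξ : EReal | encRadius {y | ξ < f y} ≤ (‖x‖₊ : ℝ≥0∞)}

/-- The lower transform `f̌ = -((-f)^)`. -/
def checkE (f : ES N → EReal) (x : ES N) : EReal := - hatE (fun y => - f y) x

/-- The transform `f̂` for `[0,∞]`-valued functions. -/
def hatT (f : ES N → ℝ≥0∞) (x : ES N) : ℝ≥0∞ :=
  sInf {ξ : ℝ≥0∞ | encRadius {y | ξ < f y} ≤ (‖x‖₊ : ℝ≥0∞)}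

/-- The lower transform `f̌(x) = γ_f^-(|x|)`, `γ_f^-(t) = sup {ξ | ρ({f < ξ}) ≤ t}`,
for `[0,∞]`-valued functions. -/
def checkT (f : ES N → ℝ≥0∞) (x : ES N) : ℝ≥0∞ :=
  sSup {ξ : ℝ≥0∞ | encRadius {y | f y < ξ} ≤ (‖x‖₊ : ℝ≥0∞)}

/-- The `L^p` "norm" (`p ∈ [1,∞]`, essential supremum when `p = ∞`) of a `[0,∞]`-valued
function. -/
def pNorm (p : ℝ≥0∞) (h : ES N → ℝ≥0∞) : ℝ≥0∞ :=
  if p = ∞ then essSup h volume else (∫⁻ x, h x ^ p.toReal) ^ (1 / p.toReal)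

/-!
A strict sublevel set of `f ⊻ g` is the Minkowski sum of the corresponding sublevel sets of `f` and
`g`. Two sets of enclosing radii `r` and `s` have a sum inside a ball of radius `r + s`, whose
volume is at most `2 ^ (N - 1)` times the sum of the volumes of balls of radii `r` and `s`. The open
centred ball whose radius is the enclosing radius of `{f < ξ}` lies in `{f̌ ≤ ξ}`. Letting the level
increase to `ξ` gives `|{f ⊻ g < ξ}| ≤ 2 ^ (N - 1) * (|{f̌ < ξ}| + |{ǧ < ξ}|)`.

If `m ≤ f` and `-m ≤ g` then `|m| ≤ f ⊻ g`, so only levels `ξ > |m|` matter, and there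
`e ∓ m ≤ 2 * max e |m|`: the shift by `m` costs a factor `2`. The layer-cake formula turns the
level-set bound into a bound for the integrals of `φ`, and convexity of `φ` absorbs the factor
`2 ^ (N - 1)` into the scaling, giving `2 * 2 ^ (N - 1) = 2 ^ N` in total.
-/

section Order

lemma lowerSemicontinuous_of_monotone {α β : Type*} [TopologicalSpace α] [LinearOrder α]
    [TopologicalSpace β] [LinearOrder β] [ClosedIicTopology β] {φ : α → β} (hφ : Monotone φ)
    (hleft : ∀ x, ContinuousWithinAt φ (Iio x) x) : LowerSemicontinuous φ := by
  intro z t ht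
  rw [← nhdsLT_sup_nhdsGE z, eventually_sup]
  exact ⟨(hleft z).eventually (Ioi_mem_nhds ht),
    eventually_mem_nhdsWithin.mono fun w hw => ht.trans_le (hφ hw)⟩

lemma exists_forall_lt_iff_lt_of_antitone {α β : Type*} [CompleteLinearOrder α]
    [TopologicalSpace α] [OrderTopology α] [LinearOrder β] {ψ : α → β} (hψ : Antitone ψ)
    (hlsc : LowerSemicontinuous ψ) {t : β} (ht : ψ ⊤ ≤ t) : ∃ ξ, ∀ e, t < ψ e ↔ e < ξ := by
  have hmem : sInf {e | ψ e ≤ t} ∈ {e | ψ e ≤ t} :=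
    IsClosed.sInf_mem ⟨⊤, ht⟩ (hlsc.isClosed_preimage t)
  exact ⟨sInf {e | ψ e ≤ t}, fun e =>
    ⟨fun he => not_le.1 fun hle => he.not_ge ((hψ hle).trans hmem),
      fun he => not_le.1 fun hle => he.not_ge (sInf_le hle)⟩⟩

lemma le_map_sInf_add_sInf {α β : Type*} [CompleteLinearOrder α] [TopologicalSpace α]
    [OrderTopology α] [Add α] [ContinuousAdd α] [Preorder β] [TopologicalSpace β]
    [ClosedIciTopology β] {F : α → β} (hF : Continuous F) {S T : Set α} (hS : S.Nonempty)
    (hT : T.Nonempty) {L : β} (h : ∀ r ∈ S, ∀ s ∈ T, L ≤ F (r + s)) :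
    L ≤ F (sInf S + sInf T) := by
  have hclosed : IsClosed (F ⁻¹' Ici L) := isClosed_Ici.preimage hF
  rw [← mem_Ici, ← mem_preimage, ← hclosed.closure_eq]
  exact map_mem_closure₂ continuous_add (sInf_mem_closure hS) (sInf_mem_closure hT) h

lemma ennreal_add_pow_le (r s : ℝ≥0∞) (n : ℕ) :
    (r + s) ^ n ≤ 2 ^ (n - 1) * (r ^ n + s ^ n) := by
  cases n with
  | zero => simp
  | succ n =>
    have := ENNReal.rpow_add_le_mul_rpow_add_rpow r s (p := (n + 1 : ℕ)) (by simp)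
    rw [← Nat.cast_pred n.succ_pos] at this
    exact_mod_cast this

end Order

section LayerCake

variable {α : Type*} [MeasurableSpace α] {μ : Measure α}

lemma lintegral_eq_lintegral_meas_ofReal_lt {h : α → ℝ≥0∞} (hh : AEMeasurable h μ) :
    ∫⁻ x, h x ∂μ = ∫⁻ t in Ioi (0 : ℝ), μ {x | ENNReal.ofReal t < h x} := by
  by_cases htop : μ {x | h x = ∞} = 0
  · have hfin : ∀ᵐ x ∂μ, h x ≠ ∞ := by simpa [ae_iff] using htop
    calc ∫⁻ x, h x ∂μ = ∫⁻ x, ENNReal.ofReal (h x).toReal ∂μ :=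
          lintegral_congr_ae (hfin.mono fun x hx => (ENNReal.ofReal_toReal hx).symm)
      _ = ∫⁻ t in Ioi (0 : ℝ), μ {x | t < (h x).toReal} :=
          lintegral_eq_lintegral_meas_lt μ (Eventually.of_forall fun _ => ENNReal.toReal_nonneg)
            hh.ennreal_toReal
      _ = ∫⁻ t in Ioi (0 : ℝ), μ {x | ENNReal.ofReal t < h x} :=
          setLIntegral_congr_fun measurableSet_Ioi fun t ht => measure_congr <|
            hfin.mono fun x hx => propext (ENNReal.ofReal_lt_iff_lt_toReal (le_of_lt ht) hx).symm
  · rw [lintegral_eq_top_of_measure_eq_top_ne_zero hh htop, eq_comm, eq_top_iff]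
    calc ∞ = ∫⁻ _ in Ioi (0 : ℝ), μ {x | h x = ∞} := by
          rw [setLIntegral_const, Real.volume_Ioi, ENNReal.mul_top htop]
      _ ≤ ∫⁻ t in Ioi (0 : ℝ), μ {x | ENNReal.ofReal t < h x} :=
          lintegral_mono fun t => measure_mono fun x (hx : h x = ∞) =>
            ENNReal.ofReal_lt_top.trans_eq hx.symm

lemma lintegral_le_mul_lintegral_add_of_meas_lt_le {h u v : α → ℝ≥0∞} (hu : AEMeasurable u μ)
    (hv : AEMeasurable v μ) {K : ℝ≥0∞}
    (hle : ∀ t, μ {x | t < h x} ≤ K * (μ {x | t < u x} + μ {x | t < v x})) :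
    ∫⁻ x, h x ∂μ ≤ K * (∫⁻ x, u x ∂μ + ∫⁻ x, v x ∂μ) := by
  have hmeas (w : α → ℝ≥0∞) : Measurable fun t : ℝ => μ {x | ENNReal.ofReal t < w x} :=
    Antitone.measurable fun _ _ hst => measure_mono fun _ hx =>
      (ENNReal.ofReal_le_ofReal hst).trans_lt hx
  -- `h` need not be measurable, so the layer-cake formula is applied to a measurable minorant.
  obtain ⟨k, hk, hkh, hkeq⟩ := exists_measurable_le_lintegral_eq μ h
  rw [hkeq, lintegral_eq_lintegral_meas_ofReal_lt hk.aemeasurable,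
    lintegral_eq_lintegral_meas_ofReal_lt hu, lintegral_eq_lintegral_meas_ofReal_lt hv,
    ← lintegral_add_left (hmeas u), ← lintegral_const_mul K (by exact (hmeas u).add (hmeas v))]
  exact lintegral_mono fun t => (measure_mono fun x hx => hx.trans_le (hkh x)).trans (hle _)

end LayerCake

section Haar

open Module

variable {E : Type*} [NormedAddCommGroup E] [NormedSpace ℝ E] [FiniteDimensional ℝ E]
  [MeasurableSpace E] [BorelSpace E] (μ : Measure E) [μ.IsAddHaarMeasure]

lemma addHaar_eball [Nontrivial E] (x : E) (r : ℝ≥0∞) :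
    μ (Metric.eball x r) = r ^ finrank ℝ E * μ (Metric.ball 0 1) := by
  induction r with
  | top =>
    have hball : μ (Metric.ball 0 1) ≠ 0 := (Metric.measure_ball_pos μ 0 one_pos).ne'
    have := NormedSpace.noncompactSpace ℝ E
    rw [Metric.eball_top, measure_univ_of_isAddLeftInvariant, ENNReal.top_pow finrank_pos.ne',
      ENNReal.top_mul hball]
  | coe r =>
    rw [Metric.eball_coe, Measure.addHaar_ball μ x r.coe_nonneg,
      ENNReal.ofReal_pow r.coe_nonneg, ENNReal.ofReal_coe_nnreal]

lemma addHaar_closedEBall (x : E) (r : ℝ≥0∞) :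
    μ (Metric.closedEBall x r) = r ^ finrank ℝ E * μ (Metric.ball 0 1) := by
  induction r with
  | top =>
    rw [Metric.closedEBall_top]
    rcases subsingleton_or_nontrivial E with _ | _
    · rw [finrank_zero_of_subsingleton, pow_zero, one_mul,
        Subsingleton.eq_univ_of_nonempty (Metric.nonempty_ball.2 one_pos)]
    · rw [← Metric.eball_top x, addHaar_eball]
  | coe r =>
    rw [Metric.closedEBall_coe, Measure.addHaar_closedBall μ x r.coe_nonneg,
      ENNReal.ofReal_pow r.coe_nonneg, ENNReal.ofReal_coe_nnreal]

end Haar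

section EnclosingRadius

lemma encRadius_mono {X Y : Set (ES N)} (h : X ⊆ Y) : encRadius X ≤ encRadius Y :=
  sInf_le_sInf fun _ ⟨c, hc⟩ => ⟨c, fun x hx => hc x (h hx)⟩

lemma volume_add_le_encRadius_add_pow (X Y : Set (ES N)) :
    volume (X + Y) ≤ (encRadius X + encRadius Y) ^ N * volume (Metric.ball (0 : ES N) 1) := by
  have hF : Continuous fun r : ℝ≥0∞ => r ^ N * volume (Metric.ball (0 : ES N) 1) :=
    (ENNReal.continuous_mul_const measure_ball_lt_top.ne).comp (ENNReal.continuous_pow N)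
  have hne (Z : Set (ES N)) : {r : ℝ≥0∞ | ∃ c, ∀ x ∈ Z, edist x c ≤ r}.Nonempty :=
    ⟨∞, 0, fun _ _ => le_top⟩
  refine le_map_sInf_add_sInf hF (hne X) (hne Y) ?_
  rintro r ⟨c, hc⟩ s ⟨d, hd⟩
  have hsub : X + Y ⊆ Metric.closedEBall (c + d) (r + s) := by
    rintro _ ⟨x, hx, y, hy, rfl⟩
    exact (edist_add_add_le x y c d).trans (add_le_add (hc x hx) (hd y hy))
  calc volume (X + Y) ≤ volume (Metric.closedEBall (c + d) (r + s)) := measure_mono hsub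
    _ = (r + s) ^ N * volume (Metric.ball (0 : ES N) 1) := by
      rw [addHaar_closedEBall, finrank_euclideanSpace_fin]

lemma volume_add_le_volume_eball_encRadius [NeZero N] (X Y : Set (ES N)) :
    volume (X + Y) ≤ 2 ^ (N - 1) *
      (volume (Metric.eball (0 : ES N) (encRadius X)) +
        volume (Metric.eball (0 : ES N) (encRadius Y))) := by
  rw [addHaar_eball, addHaar_eball, finrank_euclideanSpace_fin, ← add_mul, ← mul_assoc]
  exact (volume_add_le_encRadius_add_pow X Y).trans
    (mul_le_mul_left (ennreal_add_pow_le _ _ N) _)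

end EnclosingRadius

section LowerTransform

lemma checkE_le_of_enorm_lt_encRadius {p : ES N → EReal} {ξ : EReal} {x : ES N}
    (hx : ‖x‖ₑ < encRadius {y | p y < ξ}) : checkE p x ≤ ξ := by
  refine EReal.neg_le.2 (le_sInf fun η hη => ?_)
  by_contra! hlt
  have hsub : {y | p y < ξ} ⊆ {y | η < -p y} := fun y hy =>
    hlt.trans (EReal.neg_lt_neg_iff.2 hy)
  exact (hx.trans_le (encRadius_mono hsub)).not_ge hη

lemma measurable_checkE (p : ES N → EReal) : Measurable (checkE p) := by
  let γ : ℝ≥0 → EReal := fun r => -sInf {ξ : EReal | encRadius {y | ξ < -p y} ≤ (r : ℝ≥0∞)}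
  have hγ : Monotone γ := fun r r' hr => EReal.neg_le_neg_iff.2 <| sInf_le_sInf fun ξ hξ =>
    le_trans (b := (r : ℝ≥0∞)) hξ (ENNReal.coe_le_coe.2 hr)
  exact hγ.measurable.comp measurable_nnnorm

lemma volume_eball_encRadius_le (p : ES N → EReal) (ξ : EReal) :
    volume (Metric.eball (0 : ES N) (encRadius {y | p y < ξ})) ≤ volume {x | checkE p x ≤ ξ} :=
  measure_mono fun x hx => checkE_le_of_enorm_lt_encRadius (by simpa using hx)

end LowerTransform

section InfMax

lemma setOf_infMaxE_lt (f g : ES N → EReal) (ξ : EReal) :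
    {x | infMaxE f g x < ξ} = {x | f x < ξ} + {y | g y < ξ} := by
  ext x
  simp only [infMaxE, iInf_lt_iff, max_lt_iff, mem_ofPred_eq, Set.mem_add]
  exact ⟨fun ⟨y, hf, hg⟩ => ⟨x - y, hf, y, hg, sub_add_cancel x y⟩,
    fun ⟨z, hf, y, hg, hzy⟩ => ⟨y, by rwa [← hzy, add_sub_cancel_right], hg⟩⟩

lemma infMaxE_max_zero_left (f : ES N → EReal) {g : ES N → EReal} (hg : ∀ x, 0 ≤ g x) :
    infMaxE (fun x => max (f x) 0) g = infMaxE f g := by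
  funext x
  simp only [infMaxE, max_assoc, max_eq_right (hg _)]

lemma coe_abs_le_infMaxE {f g : ES N → EReal} {m : ℝ} (hf : ∀ x, (m : EReal) ≤ f x)
    (hg : ∀ x, ((-m : ℝ) : EReal) ≤ g x) (x : ES N) : ((|m| : ℝ) : EReal) ≤ infMaxE f g x := by
  refine le_iInf fun y => ?_
  rw [abs_eq_max_neg, EReal.coe_strictMono.monotone.map_max]
  exact max_le_max (hf _) (hg y)

lemma volume_infMaxE_lt_le [NeZero N] (f g : ES N → EReal) (ξ : EReal) :
    volume {x | infMaxE f g x < ξ} ≤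
      2 ^ (N - 1) * (volume {x | checkE f x < ξ} + volume {x | checkE g x < ξ}) := by
  -- At the level `ξ` itself the balls only land in `{checkE p ≤ ξ}`, so approach `ξ` from below.
  have hbelow (η : EReal) (hη : η < ξ) : volume {x | infMaxE f g x < η} ≤
      2 ^ (N - 1) * (volume {x | checkE f x < ξ} + volume {x | checkE g x < ξ}) := by
    have hball (p : ES N → EReal) :
        volume (Metric.eball (0 : ES N) (encRadius {y | p y < η})) ≤
          volume {x | checkE p x < ξ} :=
      (volume_eball_encRadius_le p η).trans (measure_mono fun x hx => hx.trans_lt hη)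
    rw [setOf_infMaxE_lt]
    exact (volume_add_le_volume_eball_encRadius _ _).trans
      (mul_le_mul_right (add_le_add (hball f) (hball g)) _)
  rcases eq_bot_or_bot_lt ξ with rfl | hξ
  · simp
  obtain ⟨η, hη_mono, hη_mem, hη_tendsto⟩ := exists_seq_strictMono_tendsto' hξ
  have hunion : {x | infMaxE f g x < ξ} = ⋃ n, {x | infMaxE f g x < η n} := by
    ext x
    rw [mem_iUnion]
    exact ⟨fun hx => (hη_tendsto.eventually_const_lt hx).exists,
      fun ⟨n, hx⟩ => hx.trans (hη_mem n).2⟩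
  have hmono : Monotone fun n => {x | infMaxE f g x < η n} := fun _ _ hn _ hx =>
    lt_of_lt_of_le hx (hη_mono.monotone hn)
  rw [hunion, hmono.measure_iUnion]
  exact iSup_le fun n => hbelow (η n) (hη_mem n).2

end InfMax

section Reciprocal

lemma eInv_antitone : Antitone eInv := fun _ _ h =>
  ENNReal.inv_le_inv.2 (EReal.toENNReal_le_toENNReal h)

lemma continuous_eInv : Continuous eInv :=
  continuous_inv.comp EReal.continuous_toENNReal

lemma inv_two_mul_eInv_le {e M : EReal} {c : ℝ} (he : e ≤ M) (hc : ((|c| : ℝ) : EReal) ≤ M) :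
    2⁻¹ * eInv M ≤ eInv (e + c) := by
  have hcM : (c : EReal) ≤ M := (EReal.coe_le_coe_iff.2 (le_abs_self c)).trans hc
  have hdouble : (e + c).toENNReal ≤ 2 * M.toENNReal :=
    calc (e + c).toENNReal ≤ (M + M).toENNReal :=
          EReal.toENNReal_le_toENNReal (add_le_add he hcM)
      _ ≤ M.toENNReal + M.toENNReal := EReal.toENNReal_add_le
      _ = 2 * M.toENNReal := (two_mul _).symm
  calc 2⁻¹ * eInv M = (2 * M.toENNReal)⁻¹ :=
        (ENNReal.mul_inv (Or.inl two_ne_zero) (Or.inl ENNReal.ofNat_ne_top)).symm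
    _ ≤ eInv (e + c) := ENNReal.inv_le_inv.2 hdouble

lemma map_two_mul_inv_mul_eInv_le {φ : ℝ≥0∞ → ℝ≥0∞} (hφ : Monotone φ) {e M : EReal}
    {c : ℝ} (he : e ≤ M) (hc : ((|c| : ℝ) : EReal) ≤ M) (s : ℝ≥0∞) :
    φ ((2 * s)⁻¹ * eInv M) ≤ φ (s⁻¹ * eInv (e + c)) := by
  refine hφ ?_
  calc (2 * s)⁻¹ * eInv M = s⁻¹ * (2⁻¹ * eInv M) := by
        rw [ENNReal.mul_inv (Or.inl two_ne_zero) (Or.inl ENNReal.ofNat_ne_top),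
          mul_comm 2⁻¹, mul_assoc]
    _ ≤ s⁻¹ * eInv (e + c) := mul_le_mul_right (inv_two_mul_eInv_le he hc) _

lemma measurable_map_eInv_checkE_add {φ : ℝ≥0∞ → ℝ≥0∞} (hφ : Monotone φ)
    (p : ES N → EReal) (s : ℝ≥0∞) (c : ℝ) :
    Measurable fun x => φ (s⁻¹ * eInv (checkE p x + c)) := by
  have hanti : Antitone fun e : EReal => φ (s⁻¹ * eInv (e + c)) := fun _ _ h =>
    hφ (mul_le_mul_right (eInv_antitone (add_le_add_left h _)) _)
  exact hanti.measurable.comp (measurable_checkE p)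

end Reciprocal

namespace IsYoungFunction

variable {φ : ℝ≥0∞ → ℝ≥0∞}

lemma map_mul_le (hφ : IsYoungFunction φ) {α : ℝ≥0∞} (hα : α ≤ 1) (x : ℝ≥0∞) :
    φ (α * x) ≤ α * φ x := by
  simpa [hφ.map_zero] using hφ.convex (x := x) (y := 0) (add_tsub_cancel_of_le hα)

lemma exists_lt_map_mul_eInv_iff_lt (hφ : IsYoungFunction φ) {q : ℝ≥0∞} (hq : q ≠ ∞)
    (t : ℝ≥0∞) : ∃ ξ, ∀ e, t < φ (q * eInv e) ↔ e < ξ := by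
  have hanti : Antitone fun e => φ (q * eInv e) := fun _ _ h =>
    hφ.mono (mul_le_mul_right (eInv_antitone h) q)
  have hlsc : LowerSemicontinuous fun e => φ (q * eInv e) :=
    (lowerSemicontinuous_of_monotone hφ.mono hφ.left_continuous).comp
      ((ENNReal.continuous_const_mul hq).comp continuous_eInv)
  exact exists_forall_lt_iff_lt_of_antitone hanti hlsc (by simp [eInv, toENN, hφ.map_zero])

lemma lintegral_inv_mul_le_div (hφ : IsYoungFunction φ) {α : Type*} [MeasurableSpace α]
    {μ : Measure α} {u : α → ℝ≥0∞} {r s : ℝ≥0∞} (hr : r ≠ 0) (hrs : r ≤ s)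
    (hu : ∫⁻ x, φ (r⁻¹ * u x) ∂μ ≤ 1) : ∫⁻ x, φ (s⁻¹ * u x) ∂μ ≤ r / s := by
  have hle : r / s ≤ 1 := ENNReal.div_le_of_le_mul (by rwa [one_mul])
  have hinv : s⁻¹ = r / s * r⁻¹ := by
    rcases eq_or_ne r ∞ with rfl | hr'
    · simp [top_le_iff.1 hrs]
    · rw [div_eq_mul_inv, mul_right_comm, ENNReal.mul_inv_cancel hr hr', one_mul]
  calc ∫⁻ x, φ (s⁻¹ * u x) ∂μ ≤ ∫⁻ x, r / s * φ (r⁻¹ * u x) ∂μ := lintegral_mono fun x => by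
        rw [hinv, mul_assoc]
        exact hφ.map_mul_le hle _
    _ = r / s * ∫⁻ x, φ (r⁻¹ * u x) ∂μ :=
        lintegral_const_mul' _ _ (hle.trans_lt ENNReal.one_lt_top).ne
    _ ≤ r / s := mul_le_of_le_one_right' hu

end IsYoungFunction

lemma le_mul_luxNorm_add_luxNorm {φ : ℝ≥0∞ → ℝ≥0∞} (hφ : φ 0 = 0)
    {u v : ES N → ℝ≥0∞} {L K : ℝ≥0∞} (hK : K ≠ ∞)
    (h : ∀ r s, 0 < r → 0 < s → ∫⁻ x, φ (r⁻¹ * u x) ≤ 1 → ∫⁻ x, φ (s⁻¹ * v x) ≤ 1 →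
      L ≤ K * (r + s)) :
    L ≤ K * (luxNorm φ u + luxNorm φ v) := by
  have hne (w : ES N → ℝ≥0∞) : {r : ℝ≥0∞ | 0 < r ∧ ∫⁻ x, φ (r⁻¹ * w x) ≤ 1}.Nonempty :=
    ⟨∞, ENNReal.zero_lt_top, by simp [hφ]⟩
  exact le_map_sInf_add_sInf (ENNReal.continuous_const_mul hK) (hne u) (hne v)
    fun r hr s hs => h r s hr.1 hs.1 hr.2 hs.2

section YoungIntegral

variable {f g : ES N → EReal} {m : ℝ} {φ : ℝ≥0∞ → ℝ≥0∞}

lemma volume_lt_map_eInv_infMaxE_le [NeZero N] (hf : ∀ x, (m : EReal) ≤ f x)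
    (hg : ∀ x, ((-m : ℝ) : EReal) ≤ g x) (hφ : IsYoungFunction φ) {s : ℝ≥0∞} (hs : s ≠ 0)
    (t : ℝ≥0∞) :
    volume {x | t < φ ((2 * s)⁻¹ * eInv (infMaxE f g x))} ≤ 2 ^ (N - 1) *
      (volume {x | t < φ (s⁻¹ * eInv (checkE f x + (-m : ℝ)))} +
        volume {x | t < φ (s⁻¹ * eInv (checkE g x + m))}) := by
  obtain ⟨ξ, hξ⟩ := hφ.exists_lt_map_mul_eInv_iff_lt
    (ENNReal.inv_ne_top.2 (mul_ne_zero two_ne_zero hs)) t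
  simp only [hξ]
  rcases le_or_gt ξ ((|m| : ℝ) : EReal) with hξm | hmξ
  · have hempty : {x | infMaxE f g x < ξ} = ∅ := eq_empty_of_forall_notMem fun x hx =>
      (hx.trans_le hξm).not_ge (coe_abs_le_infMaxE hf hg x)
    simp [hempty]
  · have hlevel (p : ES N → EReal) (c : ℝ) (hc : |c| = |m|) :
        {x | checkE p x < ξ} ⊆ {x | t < φ (s⁻¹ * eInv (checkE p x + c))} := fun x hx =>
      ((hξ _).2 (max_lt hx (hc ▸ hmξ))).trans_le
        (map_two_mul_inv_mul_eInv_le hφ.mono (le_max_left _ _) (le_max_right _ _) s)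
    refine (volume_infMaxE_lt_le f g ξ).trans ?_
    gcongr 2 ^ (N - 1) * (volume ?_ + volume ?_)
    exacts [hlevel f (-m) (abs_neg m), hlevel g m rfl]

lemma lintegral_map_eInv_infMaxE_le [NeZero N] (hf : ∀ x, (m : EReal) ≤ f x)
    (hg : ∀ x, ((-m : ℝ) : EReal) ≤ g x) (hφ : IsYoungFunction φ) {s : ℝ≥0∞} (hs : s ≠ 0) :
    ∫⁻ x, φ ((2 * s)⁻¹ * eInv (infMaxE f g x)) ≤ 2 ^ (N - 1) *
      ((∫⁻ x, φ (s⁻¹ * eInv (checkE f x + (-m : ℝ)))) +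
        ∫⁻ x, φ (s⁻¹ * eInv (checkE g x + m))) :=
  lintegral_le_mul_lintegral_add_of_meas_lt_le
    (measurable_map_eInv_checkE_add hφ.mono f s (-m)).aemeasurable
    (measurable_map_eInv_checkE_add hφ.mono g s m).aemeasurable
    (volume_lt_map_eInv_infMaxE_le hf hg hφ hs)

end YoungIntegral

theorem luxNorm_inv_infMax_le_general [NeZero N] (f g : ES N → EReal) (m : ℝ)
    (hf : ∀ x, (m : EReal) ≤ f x) (hg : ∀ x, ((-m : ℝ) : EReal) ≤ g x) :
    (∀ x, 0 ≤ infMaxE f g x) ∧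
    ∀ φ : ℝ≥0∞ → ℝ≥0∞, IsYoungFunction φ →
      luxNorm φ (fun x => eInv (infMaxE f g x)) ≤
        2 ^ N * (luxNorm φ (fun x => eInv (checkE f x - (m : EReal))) +
          luxNorm φ (fun x => eInv (checkE g x + (m : EReal)))) := by
  refine ⟨fun x => (EReal.coe_nonneg.2 (abs_nonneg m)).trans (coe_abs_le_infMaxE hf hg x),
    fun φ hφ => ?_⟩
  simp only [sub_eq_add_neg, ← EReal.coe_neg]
  refine le_mul_luxNorm_add_luxNorm hφ.map_zero (by finiteness) fun r₁ r₂ hr₁ hr₂ hu hv => ?_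
  set s : ℝ≥0∞ := 2 ^ (N - 1) * (r₁ + r₂) with hs
  have hle : r₁ + r₂ ≤ s := le_mul_of_one_le_left' (one_le_pow₀ one_le_two)
  have hs0 : 0 < s := (hr₁.trans_le le_self_add).trans_le hle
  have hdouble : 2 ^ N * (r₁ + r₂) = 2 * s := by
    rw [hs, ← mul_assoc, mul_pow_sub_one (NeZero.ne N)]
  rw [hdouble]
  refine sInf_le ⟨by positivity, ?_⟩
  calc ∫⁻ x, φ ((2 * s)⁻¹ * eInv (infMaxE f g x))
      ≤ 2 ^ (N - 1) * ((∫⁻ x, φ (s⁻¹ * eInv (checkE f x + (-m : ℝ)))) +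
          ∫⁻ x, φ (s⁻¹ * eInv (checkE g x + m))) :=
        lintegral_map_eInv_infMaxE_le hf hg hφ hs0.ne'
    _ ≤ 2 ^ (N - 1) * (r₁ / s + r₂ / s) := by
        gcongr
        · exact hφ.lintegral_inv_mul_le_div hr₁.ne' (le_self_add.trans hle) hu
        · exact hφ.lintegral_inv_mul_le_div hr₂.ne' (le_add_self.trans hle) hv
    _ = s / s := by rw [← ENNReal.add_div, ← mul_div_assoc]
    _ ≤ 1 := ENNReal.div_self_le_one

lemma half_sub_le_of_iInf_eq {ι : Type*} {p q : ι → EReal} (hp : ∀ i, 0 ≤ p i)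
    (hq : ∀ i, 0 ≤ q i) {a b : ℝ} (ha : ⨅ i, p i = a) (hb : ⨅ i, q i = b) (i : ι) :
    (((a - b) / 2 : ℝ) : EReal) ≤ p i := by
  have ha0 : 0 ≤ a := EReal.coe_nonneg.1 (ha ▸ le_iInf hp)
  have hb0 : 0 ≤ b := EReal.coe_nonneg.1 (hb ▸ le_iInf hq)
  exact (EReal.coe_le_coe_iff.2 (by linarith)).trans (ha ▸ iInf_le p i)

theorem luxNorm_inv_infMax_le {N : ℕ} (hN : 0 < N)
    (f g : ES N → EReal) (hf : Measurable f) (hg : Measurable g)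
    (hg0 : ∀ x, 0 ≤ g x) (hfne : ∃ x, f x ≠ ⊤) (hgne : ∃ x, g x ≠ ⊤)
    (a b : ℝ) (ha : (⨅ x, max (f x) 0) = (a : EReal)) (hb : (⨅ x, g x) = (b : EReal)) :
    (∀ x, 0 ≤ infMaxE f g x) ∧
    ∀ φ : ℝ≥0∞ → ℝ≥0∞, IsYoungFunction φ →
      luxNorm φ (fun x => eInv (infMaxE f g x)) ≤
        2 ^ N *
          (luxNorm φ (fun x => eInv (checkE (fun y => max (f y) 0) x - (((a - b) / 2 : ℝ) : EReal))) +
            luxNorm φ (fun x => eInv (checkE g x + (((a - b) / 2 : ℝ) : EReal)))) := by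
  have : NeZero N := ⟨hN.ne'⟩
  have hf0 (x : ES N) : 0 ≤ max (f x) 0 := le_max_right _ _
  have hm : -((a - b) / 2) = (b - a) / 2 := by rw [← neg_div, neg_sub]
  rw [← infMaxE_max_zero_left f hg0]
  exact luxNorm_inv_infMax_le_general _ _ _ (half_sub_le_of_iInf_eq hf0 hg0 ha hb)
    (hm ▸ half_sub_le_of_iInf_eq hg0 hf0 hb ha)

end
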